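/- Let |ψ⟩ be a unit vector in H = H_1 ⊗ … ⊗ H_n and N = {N_j} a neighborhood structure. Then the pure state ρ = |ψ⟩⟨ψ| is DQLS relative to N if and only if it is FFQLS relative to N. -/

import Mathlib

namespace QDS

open Matrix
open scoped ComplexOrder

/-! ### Basic single-system notions -/

section Single

variable {ι : Type*} [Fintype ι] [DecidableEq ι]

open Classical in
/-- The (unique) positive-semidefinite square root of a positive-semidefinite matrix
(junk value `0` if no positive-semidefinite square root exists). -/
noncomputable def msqrt (A : Matrix ι ι ℂ) : Matrix ι ι ℂ :=
  if h : ∃ B : Matrix ι ι ℂ, B.PosSemidef ∧ B * B = A then h.choose else 0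

open Classical in
/-- The Moore–Penrose pseudoinverse of a matrix, defined via its characterizing
properties (it always exists and is unique for complex matrices). -/
noncomputable def mpinv (A : Matrix ι ι ℂ) : Matrix ι ι ℂ :=
  if h : ∃ B : Matrix ι ι ℂ,
      A * B * A = A ∧ B * A * B = B ∧ (A * B)ᴴ = A * B ∧ (B * A)ᴴ = B * A
  then h.choose else 0

/-- A density operator: positive semidefinite with unit trace. -/
def IsDensity (ρ : Matrix ι ι ℂ) : Prop := ρ.PosSemidef ∧ ρ.trace = 1

/-- A CPTP map in Kraus (operator-sum) form. -/
def IsCPTP (T : Matrix ι ι ℂ →ₗ[ℂ] Matrix ι ι ℂ) : Prop :=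
  ∃ (m : ℕ) (M : Fin m → Matrix ι ι ℂ),
    (∀ X, T X = ∑ k, M k * X * (M k)ᴴ) ∧ (∑ k, (M k)ᴴ * M k) = 1

/-- The Lindblad (QDS) generator with Hamiltonian `Hm` and noise operators `Lk`:
`L(X) = -i[Hm, X] + Σₖ (Lₖ X Lₖ† - ½{Lₖ†Lₖ, X})`. -/
noncomputable def lindbladMap (Hm : Matrix ι ι ℂ) {m : ℕ} (Lk : Fin m → Matrix ι ι ℂ) :
    Matrix ι ι ℂ →ₗ[ℂ] Matrix ι ι ℂ :=
  (-Complex.I) • (LinearMap.mulLeft ℂ Hm - LinearMap.mulRight ℂ Hm) +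
    ∑ k, ((LinearMap.mulRight ℂ (Lk k)ᴴ).comp (LinearMap.mulLeft ℂ (Lk k)) -
      ((1 : ℂ)/2) • (LinearMap.mulLeft ℂ ((Lk k)ᴴ * Lk k) +
        LinearMap.mulRight ℂ ((Lk k)ᴴ * Lk k)))

/-- `L` is a QDS (Lindblad) generator. -/
def IsLindblad (L : Matrix ι ι ℂ →ₗ[ℂ] Matrix ι ι ℂ) : Prop :=
  ∃ Hm : Matrix ι ι ℂ, Hm.IsHermitian ∧
    ∃ (m : ℕ) (Lk : Fin m → Matrix ι ι ℂ), L = lindbladMap Hm Lk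

/-- `Ld` is the Hilbert–Schmidt adjoint of `L` (w.r.t. `⟨X,Y⟩ = Tr(X†Y)`). -/
def IsHSAdjoint (L Ld : Matrix ι ι ℂ →ₗ[ℂ] Matrix ι ι ℂ) : Prop :=
  ∀ X Y : Matrix ι ι ℂ, ((Ld X)ᴴ * Y).trace = (Xᴴ * L Y).trace

/-- The fixed-point set of a (super)operator. -/
def fixSet (T : Matrix ι ι ℂ →ₗ[ℂ] Matrix ι ι ℂ) : Set (Matrix ι ι ℂ) := {X | T X = X}

/-- The support of an operator: the orthogonal complement of its kernel,
equivalently the range of its adjoint. -/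
noncomputable def msupp (A : Matrix ι ι ℂ) : Submodule ℂ (ι → ℂ) := LinearMap.range (Aᴴ).mulVecLin

/-- The support of a set of operators: the span of the union of their supports. -/
noncomputable def suppSet (W : Set (Matrix ι ι ℂ)) : Submodule ℂ (ι → ℂ) := ⨆ O ∈ W, msupp O

/-- The minimal modular-invariant distorted algebra generated by `W` relative to `ρ`:
the smallest subspace containing `W` that is closed under the adjoint, under the
`ρ`-modified product `(X,Y) ↦ X ρ⁻ Y`, and under the modular map `X ↦ ρ^{1/2} X ρ⁻^{1/2}`. -/
noncomputable def Fdist (ρ : Matrix ι ι ℂ) (W : Set (Matrix ι ι ℂ)) :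
    Submodule ℂ (Matrix ι ι ℂ) :=
  sInf {S : Submodule ℂ (Matrix ι ι ℂ) | W ⊆ S ∧ (∀ X ∈ S, Xᴴ ∈ S) ∧
    (∀ X ∈ S, ∀ Y ∈ S, X * mpinv ρ * Y ∈ S) ∧
    (∀ X ∈ S, msqrt ρ * X * mpinv (msqrt ρ) ∈ S)}

/-- `ρ` is globally asymptotically stable for the generator `L`: it is invariant and every
solution of `ẋ = L(x)` starting at a density operator converges to `ρ` as `t → ∞`. -/
def IsGAS (L : Matrix ι ι ℂ →ₗ[ℂ] Matrix ι ι ℂ) (ρ : Matrix ι ι ℂ) : Prop :=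
  L ρ = 0 ∧
  ∀ σ : Matrix ι ι ℂ, IsDensity σ →
    ∀ x : ℝ → Matrix ι ι ℂ, x 0 = σ →
      (∀ t : ℝ, ∀ i j, HasDerivAt (fun s : ℝ => x s i j) (L (x t) i j) t) →
      ∀ i j, Filter.Tendsto (fun t : ℝ => x t i j) Filter.atTop (nhds (ρ i j))

end Single

/-! ### Bipartite notions -/

section Bipartite

variable {α β : Type*} [Fintype α] [Fintype β] [DecidableEq α] [DecidableEq β]

/-- Partial trace over the second factor. -/
noncomputable def ptraceB (ρ : Matrix (α × β) (α × β) ℂ) : Matrix α α ℂ :=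
  Matrix.of fun i j => ∑ k : β, ρ (i, k) (j, k)

/-- The operator Schmidt span of `ρ` on the first factor:
`{Tr_B[(I ⊗ B) ρ] : B ∈ B(H_B)}`. -/
noncomputable def opSchmidtA (ρ : Matrix (α × β) (α × β) ℂ) : Set (Matrix α α ℂ) :=
  {A | ∃ B : Matrix β β ℂ,
    A = ptraceB ((Matrix.kroneckerMap (· * ·) (1 : Matrix α α ℂ) B) * ρ)}

/-- The (vector) Schmidt span of `v ∈ V_A ⊗ V_B` relative to `V_A`: the image of `v`
under partial inner products with vectors of `V_B`. -/
def vSchmidtA (v : α × β → ℂ) : Set (α → ℂ) :=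
  {w | ∃ b : β → ℂ, w = fun a => ∑ j, (starRingEnd ℂ) (b j) * v (a, j)}

/-- `Σ_A(v) ⊗ V_B` as a subspace of `V_A ⊗ V_B`. -/
noncomputable def extVSchmidtA (v : α × β → ℂ) : Submodule ℂ (α × β → ℂ) :=
  Submodule.span ℂ {v' | ∃ w ∈ vSchmidtA v, ∃ b : β → ℂ, v' = fun p => w p.1 * b p.2}

end Bipartite

/-! ### Multipartite notions -/

section Multipartite

variable {n : ℕ} {d : Fin n → Type*} [∀ a, Fintype (d a)] [∀ a, DecidableEq (d a)]

/-- Index type of the neighborhood factor `H_N`. -/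
abbrev nbhdIdx (d : Fin n → Type*) (N : Finset (Fin n)) : Type _ :=
  ∀ a : {x : Fin n // x ∈ N}, d a

/-- Index type of the complementary factor `H_N̄`. -/
abbrev nbhdCoIdx (d : Fin n → Type*) (N : Finset (Fin n)) : Type _ :=
  ∀ a : {x : Fin n // ¬ x ∈ N}, d a

/-- The factorization `H ≃ H_N ⊗ H_N̄` at the level of index types. -/
def splitEquiv (d : Fin n → Type*) (N : Finset (Fin n)) :
    (∀ a, d a) ≃ nbhdIdx d N × nbhdCoIdx d N :=
  Equiv.piEquivPiSubtypeProd (fun x => x ∈ N) d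

variable (d)

/-- The operator `A ⊗ B` on `H = H_N ⊗ H_N̄`, viewed as an operator on `H`. -/
noncomputable def splitLift (N : Finset (Fin n))
    (A : Matrix (nbhdIdx d N) (nbhdIdx d N) ℂ)
    (B : Matrix (nbhdCoIdx d N) (nbhdCoIdx d N) ℂ) :
    Matrix (∀ a, d a) (∀ a, d a) ℂ :=
  (Matrix.kroneckerMap (· * ·) A B).submatrix (splitEquiv d N) (splitEquiv d N)

/-- The neighborhood operator `A ⊗ I_N̄` on `H`. -/
noncomputable def nbhdLift (N : Finset (Fin n))
    (A : Matrix (nbhdIdx d N) (nbhdIdx d N) ℂ) : Matrix (∀ a, d a) (∀ a, d a) ℂ :=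
  splitLift d N A 1

/-- The operator `I_N ⊗ B` on `H`. -/
noncomputable def coLift (N : Finset (Fin n))
    (B : Matrix (nbhdCoIdx d N) (nbhdCoIdx d N) ℂ) : Matrix (∀ a, d a) (∀ a, d a) ℂ :=
  splitLift d N 1 B

/-- The reduced state `ρ_N = Tr_N̄(ρ)` on the neighborhood `N`. -/
noncomputable def nbhdPtrace (N : Finset (Fin n)) (ρ : Matrix (∀ a, d a) (∀ a, d a) ℂ) :
    Matrix (nbhdIdx d N) (nbhdIdx d N) ℂ :=
  Matrix.of fun i j => ∑ k : nbhdCoIdx d N,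
    ρ ((splitEquiv d N).symm (i, k)) ((splitEquiv d N).symm (j, k))

/-- The operator Schmidt span of `ρ` on the neighborhood `N`:
`Σ_N(ρ) = {Tr_N̄[(I_N ⊗ B) ρ] : B}`. -/
noncomputable def nbhdSchmidt (N : Finset (Fin n)) (ρ : Matrix (∀ a, d a) (∀ a, d a) ℂ) :
    Set (Matrix (nbhdIdx d N) (nbhdIdx d N) ℂ) :=
  {A | ∃ B : Matrix (nbhdCoIdx d N) (nbhdCoIdx d N) ℂ,
    A = nbhdPtrace d N (coLift d N B * ρ)}

/-- The extended minimal modular-invariant distorted algebra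
`F_{ρ_N}(Σ_N(ρ)) ⊗ B(H_N̄)` as a subspace of `B(H)`. -/
noncomputable def extF (N : Finset (Fin n)) (ρ : Matrix (∀ a, d a) (∀ a, d a) ℂ) :
    Submodule ℂ (Matrix (∀ a, d a) (∀ a, d a) ℂ) :=
  Submodule.span ℂ {X | ∃ A ∈ Fdist (nbhdPtrace d N ρ) (nbhdSchmidt d N ρ),
    ∃ B : Matrix (nbhdCoIdx d N) (nbhdCoIdx d N) ℂ, X = splitLift d N A B}

/-- A neighborhood QDS generator for `N`: a Lindblad generator whose Hamiltonian and
noise operators all act as `X_N ⊗ I_N̄`. -/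
def IsNbhdGen (N : Finset (Fin n))
    (L : Matrix (∀ a, d a) (∀ a, d a) ℂ →ₗ[ℂ] Matrix (∀ a, d a) (∀ a, d a) ℂ) : Prop :=
  ∃ HN : Matrix (nbhdIdx d N) (nbhdIdx d N) ℂ, HN.IsHermitian ∧
    ∃ (m : ℕ) (Lk : Fin m → Matrix (nbhdIdx d N) (nbhdIdx d N) ℂ),
      L = lindbladMap (nbhdLift d N HN) fun k => nbhdLift d N (Lk k)

/-- A purely dissipative neighborhood generator for `N` (zero Hamiltonian in some
Lindblad representation). -/
def IsDissipNbhdGen (N : Finset (Fin n))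
    (L : Matrix (∀ a, d a) (∀ a, d a) ℂ →ₗ[ℂ] Matrix (∀ a, d a) (∀ a, d a) ℂ) : Prop :=
  ∃ (m : ℕ) (Lk : Fin m → Matrix (nbhdIdx d N) (nbhdIdx d N) ℂ),
    L = lindbladMap 0 fun k => nbhdLift d N (Lk k)

/-- The family of neighborhood generators `Lj` is frustration free: every invariant
state of the sum is invariant for each component. -/
def IsFFFamily {M : ℕ}
    (Lj : Fin M → (Matrix (∀ a, d a) (∀ a, d a) ℂ →ₗ[ℂ] Matrix (∀ a, d a) (∀ a, d a) ℂ)) :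
    Prop :=
  ∀ ρ : Matrix (∀ a, d a) (∀ a, d a) ℂ, IsDensity ρ → (∑ j, Lj j) ρ = 0 → ∀ j, Lj j ρ = 0

/-- `ρ` is frustration-free quasi-locally stabilizable relative to the neighborhood
structure `Nb`. -/
def IsFFQLS {M : ℕ} (Nb : Fin M → Finset (Fin n))
    (ρ : Matrix (∀ a, d a) (∀ a, d a) ℂ) : Prop :=
  ∃ Lj : Fin M → (Matrix (∀ a, d a) (∀ a, d a) ℂ →ₗ[ℂ] Matrix (∀ a, d a) (∀ a, d a) ℂ),
    (∀ j, IsNbhdGen d (Nb j) (Lj j)) ∧ IsFFFamily d Lj ∧ IsGAS (∑ j, Lj j) ρ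

/-- A pure state `|ψ⟩⟨ψ|` is dissipatively quasi-locally stabilizable relative to `Nb`:
it is GAS for a QL generator whose components have zero Hamiltonian and neighborhood
noise operators annihilating `ψ`. -/
def IsDQLS {M : ℕ} (Nb : Fin M → Finset (Fin n)) (ψ : (∀ a, d a) → ℂ) : Prop :=
  ∃ Lj : Fin M → (Matrix (∀ a, d a) (∀ a, d a) ℂ →ₗ[ℂ] Matrix (∀ a, d a) (∀ a, d a) ℂ),
    (∀ j, ∃ (m : ℕ) (Dk : Fin m → Matrix (nbhdIdx d (Nb j)) (nbhdIdx d (Nb j)) ℂ),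
      Lj j = lindbladMap 0 (fun k => nbhdLift d (Nb j) (Dk k)) ∧
      ∀ k, (nbhdLift d (Nb j) (Dk k)).mulVec ψ = 0) ∧
    IsGAS (∑ j, Lj j) (Matrix.vecMulVec ψ (star ψ))

/-- The (vector) Schmidt span of `ψ` relative to the neighborhood factor `H_N`. -/
def vecSchmidt (N : Finset (Fin n)) (ψ : (∀ a, d a) → ℂ) : Set (nbhdIdx d N → ℂ) :=
  {w | ∃ b : nbhdCoIdx d N → ℂ,
    w = fun i => ∑ k, (starRingEnd ℂ) (b k) * ψ ((splitEquiv d N).symm (i, k))}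

/-- `Σ_N(ψ) ⊗ H_N̄` as a subspace of `H`. -/
noncomputable def extVecSchmidt (N : Finset (Fin n)) (ψ : (∀ a, d a) → ℂ) :
    Submodule ℂ ((∀ a, d a) → ℂ) :=
  Submodule.span ℂ {v | ∃ w ∈ vecSchmidt d N ψ, ∃ b : nbhdCoIdx d N → ℂ,
    v = fun x => w ((splitEquiv d N) x).1 * b ((splitEquiv d N) x).2}

end Multipartite


/-! ### Auxiliary analysis -/

section Aux

set_option linter.unusedSectionVars false

attribute [local instance] Matrix.normedAddCommGroup Matrix.normedSpace

variable {ι : Type*} [Fintype ι] [DecidableEq ι]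

/-- Real part of the quadratic form. -/
noncomputable def qf (v : ι → ℂ) : Matrix ι ι ℂ →ₗ[ℝ] ℝ where
  toFun X := (star v ⬝ᵥ (X *ᵥ v)).re
  map_add' X Y := by simp [Matrix.add_mulVec, dotProduct_add]
  map_smul' c X := by simp [Matrix.smul_mulVec, dotProduct_smul]

lemma qf_apply (v : ι → ℂ) (X : Matrix ι ι ℂ) : qf v X = (star v ⬝ᵥ (X *ᵥ v)).re := rfl

/-- The unit sphere. -/
def usph (ι : Type*) [Fintype ι] : Set (ι → ℂ) := {v | (star v ⬝ᵥ v).re = 1}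

lemma nrm2_eq (v : ι → ℂ) : (star v ⬝ᵥ v).re = ∑ i, ‖v i‖ ^ 2 := by
  simp only [dotProduct, Complex.re_sum]
  refine Finset.sum_congr rfl fun i _ => ?_
  simp [← Complex.normSq_eq_norm_sq, Complex.normSq_apply]

lemma star_dot_self (v : ι → ℂ) : star v ⬝ᵥ v = ((∑ i, ‖v i‖ ^ 2 : ℝ) : ℂ) := by
  rw [← nrm2_eq]
  apply Complex.ext
  · simp
  · simp only [dotProduct, Complex.im_sum, Complex.ofReal_im]
    refine Finset.sum_eq_zero fun i _ => ?_
    simp; ring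

lemma usph_compact : IsCompact (usph ι) := by
  apply Metric.isCompact_of_isClosed_isBounded
  · apply isClosed_eq _ continuous_const
    simp only [dotProduct]
    fun_prop
  · refine (Metric.isBounded_closedBall (x := (0 : ι → ℂ)) (r := 1)).subset fun v hv => ?_
    rw [mem_closedBall_zero_iff, pi_norm_le_iff_of_nonneg zero_le_one]
    intro i
    have h : ∑ i, ‖v i‖ ^ 2 = 1 := by rw [← nrm2_eq]; exact hv
    have h2 := Finset.single_le_sum (f := fun i => ‖v i‖ ^ 2) (fun i _ => sq_nonneg _)
      (Finset.mem_univ i)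
    have h3 : ‖v i‖ ^ 2 ≤ 1 := by simpa [h] using h2
    exact (sq_le_one_iff₀ (norm_nonneg _)).1 h3

lemma qf_cont : Continuous fun p : Matrix ι ι ℂ × (ι → ℂ) => qf p.2 p.1 := by
  have h : ∀ i j, Continuous fun p : Matrix ι ι ℂ × (ι → ℂ) => p.1 i j := fun i j =>
    (continuous_apply j).comp ((continuous_apply i).comp continuous_fst)
  simp only [qf_apply, dotProduct, mulVec]
  fun_prop

lemma qf_smul (c : ℂ) (v : ι → ℂ) (X : Matrix ι ι ℂ) : qf (c • v) X = ‖c‖ ^ 2 * qf v X := by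
  simp only [qf_apply, Matrix.mulVec_smul, star_smul, smul_dotProduct, dotProduct_smul, smul_eq_mul]
  rw [← mul_assoc]
  have : c * star c = ((‖c‖ ^ 2 : ℝ) : ℂ) := by
    simp [← Complex.mul_conj']
  rw [this, Complex.re_ofReal_mul]

lemma qf_one (v : ι → ℂ) : qf v 1 = (star v ⬝ᵥ v).re := by simp [qf_apply]

lemma exists_unit (v : ι → ℂ) (hv : v ≠ 0) : ∃ c : ℂ, c ≠ 0 ∧ ∃ u ∈ usph ι, v = c • u := by
  have h0 : 0 < ∑ i, ‖v i‖ ^ 2 := by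
    obtain ⟨i, hi⟩ := Function.ne_iff.1 hv
    exact Finset.sum_pos' (fun i _ => sq_nonneg _) ⟨i, Finset.mem_univ i, by
      have : ‖v i‖ ≠ 0 := by simpa using hi
      positivity⟩
  set r := Real.sqrt (∑ i, ‖v i‖ ^ 2) with hr
  have hr0 : 0 < r := Real.sqrt_pos.2 h0
  have hrc : (r : ℂ) ≠ 0 := by exact_mod_cast hr0.ne'
  refine ⟨r, hrc, (r : ℂ)⁻¹ • v, ?_, by rw [smul_smul, mul_inv_cancel₀ hrc, one_smul]⟩
  have := qf_smul (r : ℂ)⁻¹ v 1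
  rw [qf_one, qf_one, nrm2_eq v] at this
  change (star ((r : ℂ)⁻¹ • v) ⬝ᵥ ((r : ℂ)⁻¹ • v)).re = 1
  rw [this, ← Real.sq_sqrt h0.le, ← hr]
  simp
  field_simp

lemma qf_nonneg_of_unit {X : Matrix ι ι ℂ} (h : ∀ u ∈ usph ι, 0 ≤ qf u X) (v : ι → ℂ) :
    0 ≤ qf v X := by
  by_cases hv : v = 0
  · simp [hv, qf_apply]
  · obtain ⟨c, _, u, hu, rfl⟩ := exists_unit v hv
    rw [qf_smul]
    exact mul_nonneg (sq_nonneg _) (h u hu)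

lemma herm_im {X : Matrix ι ι ℂ} (hX : X.IsHermitian) (v : ι → ℂ) :
    (star v ⬝ᵥ (X *ᵥ v)).im = 0 := by
  exact hX.im_star_dotProduct_mulVec_self v

lemma psd_iff {X : Matrix ι ι ℂ} (hX : X.IsHermitian) : X.PosSemidef ↔ ∀ v, 0 ≤ qf v X := by
  rw [posSemidef_iff_dotProduct_mulVec]
  simp only [hX, true_and, qf_apply, Complex.le_def, Complex.zero_re, Complex.zero_im,
    herm_im hX, and_true]

lemma psd_ker {X : Matrix ι ι ℂ} (hX : X.PosSemidef) {v : ι → ℂ} (h : qf v X = 0) :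
    X *ᵥ v = 0 := by
  rw [← hX.dotProduct_mulVec_zero_iff]
  exact Complex.ext h (herm_im hX.1 v)

/-- Existence of solutions of linear equations. -/
lemma exists_sol_abs0 {E : Type*} [NormedAddCommGroup E] [NormedSpace ℝ E] [CompleteSpace E]
    (A : E →L[ℝ] E) (σ : E) :
    ∃ x : ℝ → E, x 0 = σ ∧ ∀ t, HasDerivAt x (A (x t)) t := by
  refine ⟨fun t => NormedSpace.exp (t • A) σ, by simp, fun t => ?_⟩
  have h := (hasDerivAt_exp_smul_const' (𝕂 := ℝ) A t)
  have h2 := h.clm_apply (hasDerivAt_const t σ)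
  simpa using h2

lemma exists_sol_abs {E : Type*} [NormedAddCommGroup E] [NormedSpace ℝ E] [FiniteDimensional ℝ E]
    (L : E →ₗ[ℝ] E) (W : Submodule ℝ E)
    (hW : ∀ X ∈ W, L X ∈ W) (σ : E) (hσ : σ ∈ W) :
    ∃ x : ℝ → E, x 0 = σ ∧ (∀ t, x t ∈ W) ∧ ∀ t, HasDerivAt x (L (x t)) t := by
  have hc : CompleteSpace W := FiniteDimensional.complete ℝ W
  obtain ⟨y, hy0, hy⟩ := exists_sol_abs0 (E := W) (LinearMap.toContinuousLinearMap (L.restrict hW))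
    ⟨σ, hσ⟩
  refine ⟨fun t => (y t : E), by simp [hy0], fun t => (y t).2, fun t => ?_⟩
  exact (W.subtypeL.hasFDerivAt.comp_hasDerivAt t (hy t))

lemma exists_sol (L : Matrix ι ι ℂ →ₗ[ℂ] Matrix ι ι ℂ) (W : Submodule ℂ (Matrix ι ι ℂ))
    (hW : ∀ X ∈ W, L X ∈ W) (σ : Matrix ι ι ℂ) (hσ : σ ∈ W) :
    ∃ x : ℝ → Matrix ι ι ℂ, x 0 = σ ∧ (∀ t, x t ∈ W) ∧ ∀ t, HasDerivAt x (L (x t)) t :=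
  exists_sol_abs (L.restrictScalars ℝ) (W.restrictScalars ℝ) hW σ hσ

lemma hasDerivAt_mat {x : ℝ → Matrix ι ι ℂ} {x' : Matrix ι ι ℂ} {t : ℝ} :
    HasDerivAt x x' t ↔ ∀ i j, HasDerivAt (fun s => x s i j) (x' i j) t := by
  refine hasDerivAt_pi.trans (forall_congr' fun i => hasDerivAt_pi)

lemma tendsto_mat {x : ℝ → Matrix ι ι ℂ} {X : Matrix ι ι ℂ} {l : Filter ℝ} :
    Filter.Tendsto x l (nhds X) ↔
      ∀ i j, Filter.Tendsto (fun s => x s i j) l (nhds (X i j)) := by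
  refine tendsto_pi_nhds.trans (forall_congr' fun i => tendsto_pi_nhds)

lemma deriv_lin {F : Type*} [NormedAddCommGroup F] [NormedSpace ℝ F]
    (φ : Matrix ι ι ℂ →ₗ[ℝ] F) {x : ℝ → Matrix ι ι ℂ} {x' : Matrix ι ι ℂ} {t : ℝ}
    (h : HasDerivAt x x' t) : HasDerivAt (fun s => φ (x s)) (φ x') t :=
  (LinearMap.toContinuousLinearMap φ).hasFDerivAt.comp_hasDerivAt t h

lemma cont_lin {F : Type*} [NormedAddCommGroup F] [NormedSpace ℝ F]
    (φ : Matrix ι ι ℂ →ₗ[ℝ] F) : Continuous φ :=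
  (LinearMap.toContinuousLinearMap φ).continuous

/-- A generator of positive semigroups. -/
noncomputable def gen {κ : Type*} [Fintype κ] (C : κ → Matrix ι ι ℂ) (G : Matrix ι ι ℂ) :
    Matrix ι ι ℂ →ₗ[ℂ] Matrix ι ι ℂ where
  toFun X := (∑ k, C k * X * (C k)ᴴ) + (G * X + X * Gᴴ)
  map_add' X Y := by
    simp only [mul_add, add_mul, Finset.sum_add_distrib]; abel
  map_smul' c X := by
    simp only [mul_smul_comm, smul_mul_assoc, ← Finset.smul_sum, smul_add, RingHom.id_apply]

variable {κ : Type*} [Fintype κ]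

lemma gen_apply (C : κ → Matrix ι ι ℂ) (G X : Matrix ι ι ℂ) :
    gen C G X = (∑ k, C k * X * (C k)ᴴ) + (G * X + X * Gᴴ) := rfl

lemma gen_star (C : κ → Matrix ι ι ℂ) (G X : Matrix ι ι ℂ) :
    (gen C G X)ᴴ = gen C G Xᴴ := by
  simp only [gen_apply, conjTranspose_add, conjTranspose_sum, conjTranspose_mul,
    conjTranspose_conjTranspose, mul_assoc]
  abel

lemma qf_conj (C X : Matrix ι ι ℂ) (v : ι → ℂ) : qf v (C * X * Cᴴ) = qf (Cᴴ *ᵥ v) X := by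
  simp only [qf_apply, star_mulVec, conjTranspose_conjTranspose]
  rw [← dotProduct_mulVec, mulVec_mulVec, mulVec_mulVec, mul_assoc]

lemma qf_gen_ker (C : κ → Matrix ι ι ℂ) (G X : Matrix ι ι ℂ) (hX : X.IsHermitian) (v : ι → ℂ)
    (hv : X *ᵥ v = 0) : qf v (gen C G X) = ∑ k, qf ((C k)ᴴ *ᵥ v) X := by
  have h1 : qf v (G * X) = 0 := by
    simp [qf_apply, ← mulVec_mulVec, hv]
  have h2 : qf v (X * Gᴴ) = 0 := by
    have : star v ᵥ* X = 0 := by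
      have := congrArg star hv
      rwa [star_mulVec, hX.eq, star_zero] at this
    rw [qf_apply, ← mulVec_mulVec, dotProduct_mulVec, this]
    simp
  rw [gen_apply, map_add, map_add, h1, h2, map_sum]
  simp [qf_conj]

lemma pos_herm (C : κ → Matrix ι ι ℂ) (G : Matrix ι ι ℂ) (x : ℝ → Matrix ι ι ℂ)
    (hx : ∀ t, HasDerivAt x (gen C G (x t)) t) (hh : ∀ t, (x t).IsHermitian)
    (h0 : (x 0).PosSemidef) (t : ℝ) (ht : 0 ≤ t) : (x t).PosSemidef := by
  obtain ⟨c, hc⟩ : ∃ c : ℝ, ∀ v ∈ usph ι, qf v (gen C G 1) < c := by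
    have := (usph_compact (ι := ι)).bddAbove_image
      (f := fun v => qf v (gen C G 1)) (qf_cont.comp (by fun_prop : Continuous fun v : ι → ℂ =>
        ((gen C G 1 : Matrix ι ι ℂ), v))).continuousOn
    obtain ⟨b, hb⟩ := this
    exact ⟨b + 1, fun v hv => (hb ⟨v, hv, rfl⟩).trans_lt (lt_add_one b)⟩
  have key : ∀ ε > 0, ∀ v ∈ usph ι, 0 < qf v (x t + (ε * Real.exp (c * t)) • 1) := by
    intro ε hε
    set z : ℝ → Matrix ι ι ℂ := fun s => x s + (ε * Real.exp (c * s)) • 1 with hz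
    have hzd : ∀ s, HasDerivAt z (gen C G (x s) + (ε * (c * Real.exp (c * s))) • 1) s := by
      intro s
      refine (hx s).add (HasDerivAt.smul_const ?_ _)
      have := ((hasDerivAt_id s).const_mul c).exp.const_mul ε
      exact this.congr_deriv (by simp only [id]; ring)
    have hzc : Continuous z := continuous_iff_continuousAt.2 fun s => (hzd s).continuousAt
    have hzh : ∀ s, (z s).IsHermitian := fun s =>
      (hh s).add (by
        rw [IsHermitian, conjTranspose_smul]; simp)
    by_contra hcon
    push Not at hcon
    obtain ⟨v, hv, hvle⟩ := hcon
    have hFc : Continuous fun p : ℝ × (ι → ℂ) => qf p.2 (z p.1) :=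
      qf_cont.comp ((hzc.comp continuous_fst).prodMk continuous_snd)
    have hK : IsCompact ((Set.Icc 0 t ×ˢ usph ι) ∩ {p : ℝ × (ι → ℂ) | qf p.2 (z p.1) ≤ 0}) :=
      (isCompact_Icc.prod usph_compact).inter_right (isClosed_le hFc continuous_const)
    obtain ⟨⟨t0, v0⟩, ⟨⟨ht0, hv0⟩, hle⟩, hmin⟩ := hK.exists_isMinOn
      ⟨(t, v), ⟨⟨ht, le_rfl⟩, hv⟩, hvle⟩ continuous_fst.continuousOn
    simp only at ht0 hv0
    have hle : qf v0 (z t0) ≤ 0 := hle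
    have hlt : ∀ s, 0 ≤ s → s < t0 → ∀ u ∈ usph ι, 0 < qf u (z s) := by
      intro s hs hst u hu
      by_contra hneg
      have := hmin (a := (s, u)) ⟨⟨⟨hs, hst.le.trans ht0.2⟩, hu⟩, not_lt.1 hneg⟩
      exact absurd hst (not_lt.2 this)
    have h1 : ∀ u ∈ usph ι, qf u (1 : Matrix ι ι ℂ) = 1 := fun u hu => by rw [qf_one]; exact hu
    have ht0pos : 0 < t0 := by
      rcases ht0.1.eq_or_lt with h | h
      · exfalso
        rw [← h, hz] at hle
        simp only [map_add, map_smul, h1 v0 hv0] at hle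
        have := (psd_iff (hh 0)).1 h0 v0
        simp at hle
        linarith
      · exact h
    have hev : ∀ᶠ s in nhdsWithin t0 (Set.Iio t0), 0 ≤ s ∧ s < t0 := by
      filter_upwards [Ioo_mem_nhdsLT ht0pos] with s hs using ⟨hs.1.le, hs.2⟩
    have hqc : ∀ u, Continuous fun s => qf u (z s) := fun u =>
      hFc.comp (continuous_id.prodMk continuous_const)
    have hge : ∀ u ∈ usph ι, 0 ≤ qf u (z t0) := fun u hu =>
      ge_of_tendsto (((hqc u).tendsto t0).mono_left nhdsWithin_le_nhds)
        (hev.mono fun s hs => (hlt s hs.1 hs.2 u hu).le)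
    have hpsd : (z t0).PosSemidef := (psd_iff (hzh t0)).2 (qf_nonneg_of_unit hge)
    have hq0 : qf v0 (z t0) = 0 := le_antisymm hle (hge v0 hv0)
    have hker := psd_ker hpsd hq0
    have hd := deriv_lin (qf v0) (hzd t0)
    have hdpos : 0 < qf v0 (gen C G (x t0) + (ε * (c * Real.exp (c * t0))) • 1) := by
      have e : gen C G (x t0) = gen C G (z t0) - (ε * Real.exp (c * t0)) • gen C G 1 := by
        have : x t0 = z t0 - ((ε * Real.exp (c * t0) : ℝ) : ℂ) • (1 : Matrix ι ι ℂ) := by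
          rw [Complex.coe_smul]; simp only [hz, add_sub_cancel_right]
        conv_lhs => rw [this, map_sub, map_smul, Complex.coe_smul]
      rw [e, map_add, map_sub, map_smul, map_smul, h1 v0 hv0,
        qf_gen_ker C G _ hpsd.1 v0 hker]
      have hs : 0 ≤ ∑ k, qf ((C k)ᴴ *ᵥ v0) (z t0) :=
        Finset.sum_nonneg fun k _ => (psd_iff hpsd.1).1 hpsd _
      have := mul_pos (mul_pos hε (Real.exp_pos (c * t0))) (sub_pos.2 (hc v0 hv0))
      simp only [smul_eq_mul]
      nlinarith
    have hsl := (hasDerivAt_iff_tendsto_slope.1 hd).mono_left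
      (nhdsWithin_mono t0 (fun s (hs : s < t0) => ne_of_lt hs) :
        nhdsWithin t0 (Set.Iio t0) ≤ _)
    have := le_of_tendsto hsl (b := 0) (hev.mono fun s hs => by
      rw [slope_def_field, hq0, sub_zero]
      exact div_nonpos_of_nonneg_of_nonpos (hlt s hs.1 hs.2 v0 hv0).le (by linarith [hs.2]))
    exact absurd hdpos (not_lt.2 this)
  refine (psd_iff (hh t)).2 (qf_nonneg_of_unit fun u hu => ?_)
  by_contra hneg
  push Not at hneg
  have he := Real.exp_pos (c * t)
  have := key (-qf u (x t) / Real.exp (c * t)) (div_pos (by linarith) he) u hu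
  rw [map_add, map_smul, qf_one, show (star u ⬝ᵥ u).re = 1 from hu,
    div_mul_cancel₀ _ he.ne'] at this
  simp at this

lemma deriv_star {x : ℝ → Matrix ι ι ℂ} {x' : Matrix ι ι ℂ} {t : ℝ}
    (h : HasDerivAt x x' t) : HasDerivAt (fun s => (x s)ᴴ) x'ᴴ t := by
  rw [hasDerivAt_mat] at h ⊢
  intro i j
  exact (h j i).star

/-- Positivity preservation. -/
lemma pos_sol (C : κ → Matrix ι ι ℂ) (G : Matrix ι ι ℂ) (x : ℝ → Matrix ι ι ℂ)
    (hx : ∀ t, HasDerivAt x (gen C G (x t)) t)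
    (h0 : (x 0).PosSemidef) (t : ℝ) (ht : 0 ≤ t) : (x t).PosSemidef := by
  have hp := pos_herm C G (fun s => (2⁻¹ : ℂ) • (x s + (x s)ᴴ)) (fun s => by
      rw [map_smul, map_add, ← gen_star]
      exact ((hx s).add (deriv_star (hx s))).const_smul (2⁻¹ : ℂ)) (fun s => by
      rw [IsHermitian, conjTranspose_smul, conjTranspose_add, conjTranspose_conjTranspose, add_comm]
      simp) (by
      rw [h0.1.eq, ← two_smul ℂ, smul_smul]; simpa using h0) t ht
  have hI : ∀ ζ : ℂ, star ζ = -ζ → (ζ • (x t - (x t)ᴴ)).PosSemidef := by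
    intro ζ hζ
    refine pos_herm C G (fun s => ζ • (x s - (x s)ᴴ)) (fun s => by
      rw [map_smul, map_sub, ← gen_star]
      exact ((hx s).sub (deriv_star (hx s))).const_smul ζ) (fun s => by
      rw [IsHermitian, conjTranspose_smul, conjTranspose_sub, conjTranspose_conjTranspose, hζ,
        neg_smul, ← smul_neg, neg_sub]) (by
      rw [h0.1.eq, sub_self, smul_zero]; exact PosSemidef.zero) t ht
  have h1 := hI Complex.I (by simp)
  have h2 := hI (-Complex.I) (by simp)
  have hz : x t - (x t)ᴴ = 0 := by
    have h3 : Complex.I • (x t - (x t)ᴴ) = 0 := by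
      ext1 i
      have hq : ∀ v, qf v (Complex.I • (x t - (x t)ᴴ)) = 0 := fun v => by
        have a := (psd_iff h1.1).1 h1 v
        have b := (psd_iff h2.1).1 h2 v
        rw [neg_smul, map_neg] at b
        linarith
      intro j
      have := congrFun (psd_ker h1 (hq (Pi.single j 1))) i
      simpa using this
    simpa using h3
  have he : x t = (x t)ᴴ := sub_eq_zero.1 hz
  rw [← he, ← two_smul ℂ, smul_smul] at hp
  simpa using hp

lemma herm_entry {X : Matrix ι ι ℂ} (hX : X.IsHermitian) (i j : ι) :
    X i j = (((qf (Pi.single i 1 + Pi.single j 1) X - qf (Pi.single i 1) X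
        - qf (Pi.single j 1) X) / 2 : ℝ) : ℂ)
      + (((qf (Pi.single i 1 + Pi.single j (-Complex.I)) X - qf (Pi.single i 1) X
        - qf (Pi.single j 1) X) / 2 : ℝ) : ℂ) * Complex.I := by
  have h1 : X j i = star (X i j) := (hX.apply j i).symm
  have hs : ∀ (k : ι) (c : ℂ), star (Pi.single k c : ι → ℂ) = Pi.single k (star c) := by
    intro k c; ext l; by_cases h : l = k
    · subst h; simp
    · simp [h]
  have e : ∀ c : ℂ, ‖c‖ = 1 → qf (Pi.single i 1 + Pi.single j c) X - qf (Pi.single i 1) X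
        - qf (Pi.single j 1) X = 2 * (c * X i j).re := by
    intro c hc
    have hcc : c.re * c.re + c.im * c.im = 1 := by
      rw [← Complex.normSq_apply, Complex.normSq_eq_norm_sq, hc]; norm_num
    simp only [qf_apply, star_add, hs, mulVec_add, add_dotProduct, dotProduct_add,
      single_dotProduct, mulVec_single, Pi.smul_apply, Matrix.col_apply, MulOpposite.smul_eq_mul_unop,
      MulOpposite.unop_op, h1, Complex.add_re, star_one, one_mul, mul_one]
    simp only [Complex.star_def, Complex.mul_re, Complex.mul_im, Complex.conj_re, Complex.conj_im]
    linear_combination (X j j).re * hcc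
  rw [e 1 (by simp), e (-Complex.I) (by simp)]
  apply Complex.ext <;> simp

lemma lim_deriv_zero {g g' : ℝ → ℝ} {a b : ℝ} (hg : ∀ t, HasDerivAt g (g' t) t)
    (ha : Filter.Tendsto g Filter.atTop (nhds a)) (hb : Filter.Tendsto g' Filter.atTop (nhds b)) :
    b = 0 := by
  have h1 : ∀ t : ℝ, ∃ c ∈ Set.Ioo t (t + 1), g' c = (g (t + 1) - g t) / (t + 1 - t) := fun t =>
    exists_hasDerivAt_eq_slope g g' (by linarith)
      (fun s _ => (hg s).continuousAt.continuousWithinAt) fun s _ => hg s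
  choose c hc hc2 using h1
  have hct : Filter.Tendsto c Filter.atTop Filter.atTop :=
    Filter.tendsto_atTop_mono (fun t => (hc t).1.le) Filter.tendsto_id
  have h2 := hb.comp hct
  have h3 : Filter.Tendsto (fun t => g (t + 1) - g t) Filter.atTop (nhds (a - a)) :=
    (ha.comp (Filter.tendsto_atTop_add_const_right _ 1 Filter.tendsto_id)).sub ha
  rw [sub_self] at h3
  refine tendsto_nhds_unique h2 (h3.congr fun t => ?_)
  simp [hc2]

lemma exists_lim (A : ℝ → Matrix ι ι ℂ) (hh : ∀ t ≥ 0, (A t).IsHermitian)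
    (hl : ∀ v, ∃ l, Filter.Tendsto (fun t => qf v (A t)) Filter.atTop (nhds l)) :
    ∃ B : Matrix ι ι ℂ, B.IsHermitian ∧ Filter.Tendsto A Filter.atTop (nhds B) := by
  choose l hl using hl
  let B : Matrix ι ι ℂ := Matrix.of fun i j =>
    (((l (Pi.single i 1 + Pi.single j 1) - l (Pi.single i 1) - l (Pi.single j 1)) / 2 : ℝ) : ℂ)
      + (((l (Pi.single i 1 + Pi.single j (-Complex.I)) - l (Pi.single i 1)
        - l (Pi.single j 1)) / 2 : ℝ) : ℂ) * Complex.I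
  have hB : Filter.Tendsto A Filter.atTop (nhds B) := by
    rw [tendsto_mat]
    intro i j
    have h1 := (((hl (Pi.single i 1 + Pi.single j 1)).sub (hl (Pi.single i 1))).sub
      (hl (Pi.single j 1))).div_const 2
    have h2 := (((hl (Pi.single i 1 + Pi.single j (-Complex.I))).sub (hl (Pi.single i 1))).sub
      (hl (Pi.single j 1))).div_const 2
    have h3 := ((Complex.continuous_ofReal.tendsto _).comp h1).add
      (((Complex.continuous_ofReal.tendsto _).comp h2).mul_const Complex.I)
    refine h3.congr' ?_
    filter_upwards [Filter.eventually_ge_atTop 0] with t ht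
    exact (herm_entry (hh t ht) i j).symm
  refine ⟨B, ?_, hB⟩
  ext i j
  have h1 := tendsto_mat.1 hB i j
  have h2 := (tendsto_mat.1 hB j i).star
  refine tendsto_nhds_unique h2 (h1.congr' ?_)
  filter_upwards [Filter.eventually_ge_atTop 0] with t ht
  exact ((hh t ht).apply i j).symm

/-- The anticommutator part. -/
noncomputable def Gd (D : κ → Matrix ι ι ℂ) : Matrix ι ι ℂ := -((1 / 2 : ℂ) • ∑ k, (D k)ᴴ * D k)

lemma Gd_herm (D : κ → Matrix ι ι ℂ) : (Gd D)ᴴ = Gd D := by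
  simp [Gd, conjTranspose_smul, conjTranspose_sum]

lemma dual_one (D : κ → Matrix ι ι ℂ) : gen (fun k => (D k)ᴴ) (Gd D) 1 = 0 := by
  rw [gen_apply, Gd_herm]
  simp only [mul_one, one_mul, conjTranspose_conjTranspose, Gd]
  module

lemma trace_dual (D : κ → Matrix ι ι ℂ) (A X : Matrix ι ι ℂ) :
    (gen (fun k => (D k)ᴴ) (Gd D) A * X).trace = (A * gen D (Gd D) X).trace := by
  simp only [gen_apply, Gd_herm, add_mul, mul_add, trace_add, Finset.sum_mul, Finset.mul_sum,
    trace_sum, conjTranspose_conjTranspose]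
  have h1 : ∀ k, ((D k)ᴴ * A * D k * X).trace = (A * (D k * X * (D k)ᴴ)).trace := fun k => by
    rw [mul_assoc, mul_assoc, trace_mul_comm]; simp only [mul_assoc]
  have h2 : (Gd D * A * X).trace = (A * (X * Gd D)).trace := by
    rw [mul_assoc, trace_mul_comm]; simp only [mul_assoc]
  simp only [h1, h2]
  rw [mul_assoc A (Gd D) X]
  ring

lemma trace_gen (D : κ → Matrix ι ι ℂ) (X : Matrix ι ι ℂ) : (gen D (Gd D) X).trace = 0 := by
  have := trace_dual D 1 X
  rw [dual_one] at this
  simpa using this.symm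

lemma deriv_trace_mul {A X : ℝ → Matrix ι ι ℂ} {A' X' : Matrix ι ι ℂ} {t : ℝ}
    (hA : HasDerivAt A A' t) (hX : HasDerivAt X X' t) :
    HasDerivAt (fun s => (A s * X s).trace) ((A' * X t).trace + (A t * X').trace) t := by
  rw [hasDerivAt_mat] at hA hX
  simp only [Matrix.trace, Matrix.diag, Matrix.mul_apply]
  rw [← Finset.sum_add_distrib]
  refine HasDerivAt.fun_sum fun i _ => ?_
  rw [← Finset.sum_add_distrib]
  exact HasDerivAt.fun_sum fun j _ => (hA i j).mul (hX j i)

lemma trace_pairing (D : κ → Matrix ι ι ℂ) (A x : ℝ → Matrix ι ι ℂ)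
    (hA : ∀ t, HasDerivAt A (gen (fun k => (D k)ᴴ) (Gd D) (A t)) t)
    (hx : ∀ t, HasDerivAt x (gen D (Gd D) (x t)) t) (t : ℝ) :
    (A 0 * x t).trace = (A t * x 0).trace := by
  have h : ∀ s, HasDerivAt (fun s => (A (t - s) * x s).trace) 0 s := by
    intro s
    have h1 : HasDerivAt (fun s => A (t - s)) (-(gen (fun k => (D k)ᴴ) (Gd D) (A (t - s)))) s := by
      have := (hA (t - s)).scomp s ((hasDerivAt_id s).const_sub t)
      exact this.congr_deriv (by simp)
    have h2 := deriv_trace_mul h1 (hx s)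
    refine h2.congr_deriv ?_
    rw [neg_mul, trace_neg, trace_dual]; ring
  have hc := is_const_of_deriv_eq_zero (fun s => (h s).differentiableAt) (fun s => (h s).deriv)
  simpa using hc t 0

lemma psd_entry {X : Matrix ι ι ℂ} (hX : X.PosSemidef) (i j : ι) :
    ‖X i j‖ ^ 2 ≤ (X i i).re * (X j j).re := by
  have h := (hX.submatrix ![i, j]).det_nonneg
  rw [det_fin_two] at h
  simp only [submatrix_apply, Matrix.cons_val_zero, Matrix.cons_val_one] at h
  rw [← hX.1.apply j i] at h
  have hi : (X i i).im = 0 := (Complex.le_def.1 (hX.diag_nonneg (i := i))).2.symm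
  have h2 := (Complex.le_def.1 h).1
  simp [Complex.mul_re, hi] at h2
  rw [← Complex.normSq_eq_norm_sq, Complex.normSq_apply]
  linarith

lemma sum_norm_sq {X : Matrix ι ι ℂ} (hX : X.IsHermitian) :
    ((∑ i, ∑ j, ‖X i j‖ ^ 2 : ℝ) : ℂ) = (X * X).trace := by
  simp only [Matrix.trace, Matrix.diag, Matrix.mul_apply]
  push_cast
  refine Finset.sum_congr rfl fun i _ => Finset.sum_congr rfl fun j _ => ?_
  rw [← hX.apply j i, ← Complex.mul_conj']; rfl

/-- Distance estimate to a pure state. -/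
lemma pure_dist {x P : Matrix ι ι ℂ} (hx : x.PosSemidef) (hx1 : x.trace = 1)
    (hP : P.IsHermitian) (hP1 : (P * P).trace = 1) (i j : ι) :
    ‖x i j - P i j‖ ^ 2 ≤ 2 * (1 - ((P * x).trace).re) := by
  have h1 := sum_norm_sq (hx.1.sub hP)
  have h2 : ∑ i, ∑ j, ‖x i j‖ ^ 2 ≤ 1 := by
    calc _ ≤ ∑ i, ∑ j, (x i i).re * (x j j).re :=
          Finset.sum_le_sum fun i _ => Finset.sum_le_sum fun j _ => psd_entry hx i j
      _ = (x.trace).re * (x.trace).re := by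
          rw [← Finset.sum_mul_sum]; simp [Matrix.trace]
      _ = 1 := by simp [hx1]
  have h3 := congrArg Complex.re (sum_norm_sq hx.1)
  rw [Complex.ofReal_re] at h3
  have h4 : ((x - P) * (x - P)).trace = (x * x).trace - 2 * (P * x).trace + 1 := by
    rw [sub_mul, mul_sub, mul_sub, trace_sub, trace_sub, trace_sub, hP1, trace_mul_comm x P]; ring
  have h5 := congrArg Complex.re h1
  rw [h4, Complex.ofReal_re] at h5
  simp at h5
  have h6 : ‖x i j - P i j‖ ^ 2 ≤ ∑ i, ∑ j, ‖x i j - P i j‖ ^ 2 :=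
    (Finset.single_le_sum (f := fun j => ‖x i j - P i j‖ ^ 2) (fun _ _ => sq_nonneg _)
      (Finset.mem_univ j)).trans
      (Finset.single_le_sum (f := fun i => ∑ j, ‖x i j - P i j‖ ^ 2)
        (fun _ _ => Finset.sum_nonneg fun _ _ => sq_nonneg _) (Finset.mem_univ i))
  linarith

/-- The main stability criterion. -/
lemma gas_of_no_invariant (D : κ → Matrix ι ι ℂ) (ψ : ι → ℂ) (hψ : star ψ ⬝ᵥ ψ = 1)
    (hD : ∀ k, D k *ᵥ ψ = 0)
    (hS : ∀ S : Submodule ℂ (ι → ℂ), (∀ k, ∀ v ∈ S, D k *ᵥ v ∈ S) →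
      (∀ v ∈ S, star ψ ⬝ᵥ v = 0) → S = ⊥) :
    IsGAS (gen D (Gd D)) (vecMulVec ψ (star ψ)) := by
  set P : Matrix ι ι ℂ := vecMulVec ψ (star ψ) with hPdef
  have hPψ : P *ᵥ ψ = ψ := by rw [hPdef, vecMulVec_mulVec, hψ]; simp
  have hPh : P.IsHermitian := by
    rw [IsHermitian, hPdef, conjTranspose_vecMulVec, star_star]
  have hPP : P * P = P := by
    rw [hPdef, vecMulVec_mul_vecMulVec, hψ]; simp
  have hPtr : P.trace = 1 := by rw [hPdef, trace_vecMulVec, dotProduct_comm, hψ]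
  have hPpsd : P.PosSemidef := by
    have := posSemidef_conjTranspose_mul_self P
    rwa [hPh.eq, hPP] at this
  have hQpsd : (1 - P).PosSemidef := by
    have := posSemidef_conjTranspose_mul_self (1 - P)
    rw [conjTranspose_sub, hPh.eq, conjTranspose_one] at this
    have e : (1 - P) * (1 - P) = 1 - P := by
      rw [sub_mul, mul_sub, mul_sub, hPP]; simp
    rwa [e] at this
  have hDP : ∀ k, D k * P = 0 := fun k => by
    rw [hPdef, mul_vecMulVec, hD k, zero_vecMulVec]
  have hPD : ∀ k, P * (D k)ᴴ = 0 := fun k => by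
    have := congrArg conjTranspose (hDP k)
    rwa [conjTranspose_mul, hPh.eq, conjTranspose_zero] at this
  have hGP : Gd D * P = 0 := by
    simp [Gd, Finset.sum_mul, mul_assoc, hDP]
  have hPG : P * Gd D = 0 := by
    have := congrArg conjTranspose hGP
    rwa [conjTranspose_mul, hPh.eq, Gd_herm, conjTranspose_zero] at this
  set Ld := gen (fun k => (D k)ᴴ) (Gd D) with hLd
  obtain ⟨A, hA0, -, hA⟩ := exists_sol Ld ⊤ (fun _ _ => trivial) P trivial
  have hAp : ∀ t ≥ 0, (A t).PosSemidef := pos_sol _ _ A hA (by rw [hA0]; exact hPpsd)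
  have hBp : ∀ t ≥ 0, (1 - A t).PosSemidef := pos_sol _ _ (fun t => 1 - A t) (fun t => by
    rw [map_sub, ← hLd, dual_one, zero_sub]
    exact (hA t).const_sub 1) (by rw [hA0]; exact hQpsd)
  have hCp : ∀ t ≥ 0, (Ld (A t)).PosSemidef := by
    refine pos_sol _ _ (fun t => Ld (A t)) (fun t => deriv_lin (Ld.restrictScalars ℝ) (hA t)) ?_
    rw [hA0, hLd, gen_apply, Gd_herm, hGP, hPG, add_zero, add_zero]
    refine posSemidef_sum _ fun k _ => hPpsd.mul_mul_conjTranspose_same _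
  have hmono : ∀ v, MonotoneOn (fun t => qf v (A t)) (Set.Ici 0) := by
    intro v
    have hd : ∀ t, HasDerivAt (fun t => qf v (A t)) (qf v (Ld (A t))) t := fun t =>
      deriv_lin (qf v) (hA t)
    refine monotoneOn_of_deriv_nonneg (convex_Ici 0)
      (fun t _ => (hd t).continuousAt.continuousWithinAt)
      (fun t _ => (hd t).differentiableAt.differentiableWithinAt) fun t ht => ?_
    rw [(hd t).deriv]
    rw [interior_Ici] at ht
    have := hCp t (le_of_lt ht)
    exact (psd_iff this.1).1 this v
  have hbd : ∀ v, ∀ t ≥ 0, qf v (A t) ≤ qf v 1 := fun v t ht => by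
    have := (psd_iff (hBp t ht).1).1 (hBp t ht) v
    rw [map_sub] at this; linarith
  obtain ⟨A', hA'h, hA'⟩ := exists_lim A (fun t ht => (hAp t ht).1) (fun v => by
    have hm : Monotone fun t => qf v (A (max t 0)) := fun s t hst =>
      hmono v (Set.mem_Ici.2 (le_max_right _ _)) (Set.mem_Ici.2 (le_max_right _ _)) (max_le_max_right 0 hst)
    have hb : BddAbove (Set.range fun t => qf v (A (max t 0))) :=
      ⟨qf v 1, by rintro _ ⟨t, rfl⟩; exact hbd v _ (le_max_right _ _)⟩
    refine ⟨_, (tendsto_atTop_ciSup hm hb).congr' ?_⟩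
    filter_upwards [Filter.eventually_ge_atTop 0] with t ht
    rw [max_eq_left ht])
  have hqlim : ∀ v, Filter.Tendsto (fun t => qf v (A t)) Filter.atTop (nhds (qf v A')) := fun v =>
    ((cont_lin (qf v)).tendsto A').comp hA'
  have hLA' : ∀ v, qf v (Ld A') = 0 := fun v =>
    lim_deriv_zero (fun t => deriv_lin (qf v) (hA t)) (hqlim v)
      (((cont_lin ((qf v).comp (Ld.restrictScalars ℝ))).tendsto A').comp hA')
  set B : Matrix ι ι ℂ := 1 - A' with hB
  have hBh : B.IsHermitian := isHermitian_one.sub hA'h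
  have hBpsd : B.PosSemidef := (psd_iff hBh).2 fun v => by
    rw [hB, map_sub, sub_nonneg]
    exact le_of_tendsto (hqlim v) ((Filter.eventually_ge_atTop 0).mono fun t ht => hbd v t ht)
  have hBψ : B *ᵥ ψ = 0 := by
    refine psd_ker hBpsd (le_antisymm ?_ ((psd_iff hBh).1 hBpsd ψ))
    rw [hB, map_sub, sub_nonpos]
    refine ge_of_tendsto (hqlim ψ) ((Filter.eventually_ge_atTop 0).mono fun t ht => ?_)
    have h1 := hmono ψ (Set.self_mem_Ici) ht ht
    have h2 : qf ψ (A 0) = qf ψ 1 := by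
      rw [hA0, qf_apply, hPψ, qf_one]
    simpa [h2] using h1
  have hBLd : ∀ v, qf v (Ld B) = 0 := fun v => by
    rw [hB, map_sub, hLd, dual_one, ← hLd, zero_sub, map_neg, hLA', neg_zero]
  have hB0 : B = 0 := by
    have hψu : ψ ∈ usph ι := by change (star ψ ⬝ᵥ ψ).re = 1; rw [hψ]; simp
    obtain ⟨v0, hv0, hmax⟩ := (usph_compact (ι := ι)).exists_isMaxOn ⟨ψ, hψu⟩
      (f := fun v => qf v B) (qf_cont.comp (by fun_prop : Continuous fun v : ι → ℂ =>
        (B, v))).continuousOn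
    set b : ℝ := qf v0 B with hb
    have hEh : ((b : ℂ) • (1 : Matrix ι ι ℂ) - B).IsHermitian := by
      refine IsHermitian.sub ?_ hBh
      rw [IsHermitian, conjTranspose_smul]; simp
    have hqE : ∀ v, qf v ((b : ℂ) • (1 : Matrix ι ι ℂ) - B) = b * qf v 1 - qf v B := fun v => by
      rw [map_sub, Complex.coe_smul, map_smul, smul_eq_mul]
    have hE : ((b : ℂ) • (1 : Matrix ι ι ℂ) - B).PosSemidef :=
      (psd_iff hEh).2 (qf_nonneg_of_unit fun u hu => by
        rw [hqE, qf_one, show (star u ⬝ᵥ u).re = 1 from hu, mul_one, sub_nonneg]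
        exact hmax hu)
    have hv0E : ((b : ℂ) • (1 : Matrix ι ι ℂ) - B) *ᵥ v0 = 0 := psd_ker hE (by
      rw [hqE, qf_one, show (star v0 ⬝ᵥ v0).re = 1 from hv0, mul_one, sub_self])
    have hb0 : b = 0 := by
      by_contra hbne
      have := hS (LinearMap.ker ((b : ℂ) • (1 : Matrix ι ι ℂ) - B).mulVecLin) ?_ ?_
      · have hm : v0 ∈ LinearMap.ker ((b : ℂ) • (1 : Matrix ι ι ℂ) - B).mulVecLin := by
          rw [LinearMap.mem_ker, mulVecLin_apply]; exact hv0E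
        rw [this, Submodule.mem_bot] at hm
        have : (star v0 ⬝ᵥ v0).re = 1 := hv0
        simp [hm] at this
      · intro k v hv
        rw [LinearMap.mem_ker, mulVecLin_apply] at hv ⊢
        have h1 := qf_gen_ker (fun k => (D k)ᴴ) (Gd D) _ hEh v hv
        rw [map_sub, map_smul, dual_one, smul_zero, zero_sub, map_neg, ← hLd, hBLd, neg_zero] at h1
        have h2 := (Finset.sum_eq_zero_iff_of_nonneg fun k _ => (psd_iff hEh).1 hE _).1 h1.symm k
          (Finset.mem_univ k)
        rw [conjTranspose_conjTranspose] at h2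
        exact psd_ker hE h2
      · intro v hv
        rw [LinearMap.mem_ker, mulVecLin_apply, sub_mulVec, smul_mulVec, one_mulVec,
          sub_eq_zero] at hv
        have h1 : star ψ ⬝ᵥ (B *ᵥ v) = 0 := by
          have := congrArg star hBψ
          rw [star_mulVec, hBh.eq, star_zero] at this
          rw [dotProduct_mulVec, this, zero_dotProduct]
        rw [← hv, dotProduct_smul, smul_eq_mul] at h1
        exact (mul_eq_zero.1 h1).resolve_left (by exact_mod_cast hbne)
    ext1 i
    intro j
    have hq : qf (Pi.single j 1) B = 0 := by
      have h1 := (psd_iff hEh).1 hE (Pi.single j 1)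
      have h2 := (psd_iff hBh).1 hBpsd (Pi.single j 1)
      rw [hqE, hb0, zero_mul] at h1
      linarith
    simpa using congrFun (psd_ker hBpsd hq) i
  have hA1 : A' = 1 := (sub_eq_zero.1 hB0).symm
  refine ⟨?_, ?_⟩
  · rw [gen_apply, Gd_herm, hGP, hPG]
    simp [hDP]
  intro σ hσ x hx0 hx i j
  have hx' : ∀ t, HasDerivAt x (gen D (Gd D) (x t)) t := fun t => hasDerivAt_mat.2 (hx t)
  have hxp : ∀ t ≥ 0, (x t).PosSemidef := pos_sol _ _ x hx' (by rw [hx0]; exact hσ.1)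
  have hxt : ∀ t, (x t).trace = 1 := by
    intro t
    have h : ∀ s, HasDerivAt (fun s => (x s).trace) 0 s := fun s => by
      have := deriv_lin ((Matrix.traceLinearMap ι ℂ ℂ).restrictScalars ℝ) (hx' s)
      simpa [trace_gen] using this
    have hc := is_const_of_deriv_eq_zero (fun s => (h s).differentiableAt) (fun s => (h s).deriv)
    have := hc t 0
    simp only [hx0, hσ.2] at this
    exact this
  have hf : Filter.Tendsto (fun t => 2 * (1 - ((P * x t).trace).re)) Filter.atTop (nhds 0) := by
    have h1 : ∀ t, (P * x t).trace = (A t * σ).trace := fun t => by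
      rw [← hA0, trace_pairing D A x hA hx' t, hx0]
    have h2 : Filter.Tendsto (fun t => ((A t * σ).trace).re) Filter.atTop
        (nhds (((1 : Matrix ι ι ℂ) * σ).trace).re) := by
      rw [← hA1]
      exact ((cont_lin (Complex.reLm.comp (((Matrix.traceLinearMap ι ℂ ℂ).comp
        (LinearMap.mulRight ℂ σ)).restrictScalars ℝ))).tendsto A').comp hA'
    rw [one_mul, hσ.2] at h2
    simp only [h1]
    have h3 := (h2.const_sub 1).const_mul 2
    simpa using h3
  have hsq : Filter.Tendsto (fun t => ‖x t i j - P i j‖ ^ 2) Filter.atTop (nhds 0) := by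
    refine squeeze_zero' (Filter.Eventually.of_forall fun t => sq_nonneg _) ?_ hf
    filter_upwards [Filter.eventually_ge_atTop 0] with t ht
    exact pure_dist (hxp t ht) (hxt t) hPh (by rw [hPP, hPtr]) i j
  rw [tendsto_iff_norm_sub_tendsto_zero]
  have h4 := hsq.sqrt
  simpa [Real.sqrt_sq] using h4

end Aux

section Aux2

set_option linter.unusedSectionVars false

variable {ι : Type*} [Fintype ι] [DecidableEq ι] {κ : Type*} [Fintype κ]

lemma lindblad_eq (Hm : Matrix ι ι ℂ) (hH : Hm.IsHermitian) {m : ℕ} (Lk : Fin m → Matrix ι ι ℂ) :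
    lindbladMap Hm Lk = gen Lk (-(Complex.I • Hm) + Gd Lk) := by
  apply LinearMap.ext
  intro X
  rw [gen_apply]
  have h1 : (-(Complex.I • Hm) + Gd Lk)ᴴ = Complex.I • Hm + Gd Lk := by
    rw [conjTranspose_add, Gd_herm, conjTranspose_neg, conjTranspose_smul, hH.eq]
    simp
  rw [h1]
  simp only [lindbladMap, Gd, LinearMap.add_apply, LinearMap.smul_apply, LinearMap.sub_apply,
    LinearMap.sum_apply, LinearMap.mulLeft_apply, LinearMap.mulRight_apply, LinearMap.comp_apply,
    Finset.sum_sub_distrib, ← Finset.smul_sum, Finset.sum_add_distrib, add_mul, mul_add,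
    neg_mul, mul_neg, smul_mul_assoc, mul_smul_comm, Finset.sum_mul, Finset.mul_sum, smul_sub,
    smul_add, neg_smul, LinearMap.neg_apply]
  abel

lemma lindblad_zero {m : ℕ} (Lk : Fin m → Matrix ι ι ℂ) :
    lindbladMap 0 Lk = gen Lk (Gd Lk) := by
  rw [lindblad_eq 0 Matrix.isHermitian_zero]
  simp

lemma sum_gen {M : ℕ} {m : Fin M → ℕ} (D : ∀ j, Fin (m j) → Matrix ι ι ℂ) :
    ∑ j, gen (D j) (Gd (D j)) =
      gen (fun p : (Σ j, Fin (m j)) => D p.1 p.2) (Gd (fun p : (Σ j, Fin (m j)) => D p.1 p.2)) := by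
  apply LinearMap.ext
  intro X
  simp only [LinearMap.sum_apply, gen_apply, Gd_herm]
  simp only [Gd, Fintype.sum_sigma, Finset.sum_add_distrib, neg_mul, mul_neg, smul_mul_assoc,
    mul_smul_comm, Finset.sum_mul, Finset.mul_sum, Finset.sum_neg_distrib, Finset.smul_sum]

lemma pure_mulVec (ψ u : ι → ℂ) : vecMulVec ψ (star ψ) *ᵥ u = (star ψ ⬝ᵥ u) • ψ := by
  ext i
  simp [Matrix.mulVec, vecMulVec_apply, dotProduct, Finset.sum_mul]
  refine Finset.sum_congr rfl fun _ _ => by ring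

lemma pure_density (ψ : ι → ℂ) (hψ : star ψ ⬝ᵥ ψ = 1) : IsDensity (vecMulVec ψ (star ψ)) := by
  refine ⟨posSemidef_vecMulVec_self_star ψ, ?_⟩
  rw [trace_vecMulVec, dotProduct_comm]
  exact hψ

lemma dot_conj (u v : ι → ℂ) : star v ⬝ᵥ u = star (star u ⬝ᵥ v) := by
  rw [star_dotProduct]

lemma dot_self_zero (v : ι → ℂ) (h : star v ⬝ᵥ v = 0) : v = 0 :=
  dotProduct_star_self_eq_zero.mp h

lemma pure_inv (C : κ → Matrix ι ι ℂ) (G : Matrix ι ι ℂ) (ψ : ι → ℂ) (hψ : star ψ ⬝ᵥ ψ = 1)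
    (h : gen C G (vecMulVec ψ (star ψ)) = 0) :
    (∀ k, ∃ l : ℂ, C k *ᵥ ψ = l • ψ) ∧ ∃ g : ℂ, G *ᵥ ψ = g • ψ := by
  have hρ := (pure_density ψ hψ).1
  have hC : ∀ k, ∃ l : ℂ, C k *ᵥ ψ = l • ψ := by
    intro k
    set l : ℂ := star ψ ⬝ᵥ (C k *ᵥ ψ) with hl
    refine ⟨l, ?_⟩
    set u := C k *ᵥ ψ - l • ψ with hu
    have hψu : star ψ ⬝ᵥ u = 0 := by
      rw [hu, dotProduct_sub, dotProduct_smul, hψ, ← hl]; simp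
    have huψ : star u ⬝ᵥ ψ = 0 := by rw [dot_conj, hψu, star_zero]
    have hk : vecMulVec ψ (star ψ) *ᵥ u = 0 := by rw [pure_mulVec, hψu, zero_smul]
    have h1 : ∑ k, qf ((C k)ᴴ *ᵥ u) (vecMulVec ψ (star ψ)) = 0 := by
      rw [← qf_gen_ker C G _ hρ.1 u hk, h, map_zero]
    have h2 := (Finset.sum_eq_zero_iff_of_nonneg
      (fun k _ => (psd_iff hρ.1).1 hρ ((C k)ᴴ *ᵥ u))).1 h1 k (Finset.mem_univ k)
    have h3 := psd_ker hρ h2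
    have h4 : star ψ ⬝ᵥ ((C k)ᴴ *ᵥ u) = 0 := by
      rw [pure_mulVec] at h3
      have := congrArg (fun w => star ψ ⬝ᵥ w) h3
      simpa [dotProduct_smul, hψ] using this
    have h5 : star (C k *ᵥ ψ) ⬝ᵥ u = 0 := by
      rw [star_mulVec, ← dotProduct_mulVec]; exact h4
    have h6 : star u ⬝ᵥ u = 0 := by
      conv_lhs => rw [hu]
      rw [← hu, star_sub, sub_dotProduct, h5, star_smul, smul_dotProduct, hψu]; simp
    have h7 := dot_self_zero u h6
    exact sub_eq_zero.1 h7
  refine ⟨hC, ?_⟩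
  choose l hl using hC
  refine ⟨-(∑ k, (star ψ ⬝ᵥ ((C k)ᴴ *ᵥ ψ)) * l k + star ψ ⬝ᵥ (Gᴴ *ᵥ ψ)), ?_⟩
  have h1 := congrArg (fun X : Matrix ι ι ℂ => X *ᵥ ψ) h
  simp only [gen_apply, add_mulVec, sum_mulVec, ← mulVec_mulVec, pure_mulVec, hψ, one_smul,
    mulVec_smul, hl, zero_mulVec, smul_smul, ← Finset.sum_smul] at h1
  rw [neg_smul, add_smul, eq_neg_iff_add_eq_zero, ← h1]
  abel

lemma no_inv_of_gas (L : Matrix ι ι ℂ →ₗ[ℂ] Matrix ι ι ℂ) (ψ : ι → ℂ) (hψ : star ψ ⬝ᵥ ψ = 1)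
    (hL : IsGAS L (vecMulVec ψ (star ψ))) (S : Submodule ℂ (ι → ℂ))
    (hS : ∀ v ∈ S, star ψ ⬝ᵥ v = 0)
    (hW : ∀ X : Matrix ι ι ℂ, (∀ u, X *ᵥ u ∈ S) → ∀ u, L X *ᵥ u ∈ S) : S = ⊥ := by
  rw [Submodule.eq_bot_iff]
  intro v hv
  by_contra hv0
  obtain ⟨c, hc, u, hu, rfl⟩ := exists_unit v hv0
  have huS : u ∈ S := by
    have := S.smul_mem c⁻¹ hv
    rwa [smul_smul, inv_mul_cancel₀ hc, one_smul] at this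
  have hu1 : star u ⬝ᵥ u = 1 := by
    have h : (star u ⬝ᵥ u).re = 1 := hu
    rw [star_dot_self, ← nrm2_eq, h]; simp
  let W : Submodule ℂ (Matrix ι ι ℂ) :=
    { carrier := {X | ∀ u, X *ᵥ u ∈ S}
      add_mem' := fun {a b} ha hb u => by rw [add_mulVec]; exact S.add_mem (ha u) (hb u)
      zero_mem' := fun u => by rw [zero_mulVec]; exact S.zero_mem
      smul_mem' := fun c a ha u => by rw [smul_mulVec]; exact S.smul_mem c (ha u) }
  obtain ⟨x, hx0, hxW, hx⟩ := exists_sol L W (fun X hX => hW X hX) (vecMulVec u (star u))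
    (fun w => by rw [pure_mulVec]; exact S.smul_mem _ huS)
  have hlim := hL.2 _ (pure_density u hu1) x hx0 (fun t => hasDerivAt_mat.1 (hx t))
  have h1 : Filter.Tendsto (fun t => star ψ ⬝ᵥ (x t *ᵥ ψ)) Filter.atTop
      (nhds (star ψ ⬝ᵥ (vecMulVec ψ (star ψ) *ᵥ ψ))) := by
    simp only [dotProduct, mulVec]
    refine tendsto_finsetSum _ fun i _ => Filter.Tendsto.const_mul _ ?_
    exact tendsto_finsetSum _ fun j _ => Filter.Tendsto.mul_const _ (hlim i j)
  have h2 : (fun t => star ψ ⬝ᵥ (x t *ᵥ ψ)) = fun _ => 0 := by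
    funext t
    exact hS _ (hxW t ψ)
  rw [h2, pure_mulVec, hψ, one_smul, hψ] at h1
  exact zero_ne_one (tendsto_nhds_unique tendsto_const_nhds h1)

lemma gen_inv (C : κ → Matrix ι ι ℂ) (G X : Matrix ι ι ℂ) (S : Submodule ℂ (ι → ℂ))
    (hC : ∀ k, ∀ v ∈ S, C k *ᵥ v ∈ S) (hG : ∀ v ∈ S, G *ᵥ v ∈ S) (hX : ∀ u, X *ᵥ u ∈ S)
    (u : ι → ℂ) : gen C G X *ᵥ u ∈ S := by
  simp only [gen_apply, add_mulVec, sum_mulVec, ← mulVec_mulVec]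
  exact S.add_mem (S.sum_mem fun k _ => hC k _ (hX _)) (S.add_mem (hG _ (hX _)) (hX _))

lemma gen_pure_zero (D : κ → Matrix ι ι ℂ) (ψ : ι → ℂ) (hD : ∀ k, D k *ᵥ ψ = 0) :
    gen D (Gd D) (vecMulVec ψ (star ψ)) = 0 := by
  have h1 : ∀ k, D k * vecMulVec ψ (star ψ) = 0 := fun k => by
    rw [mul_vecMulVec, hD, zero_vecMulVec]
  have h2 : Gd D * vecMulVec ψ (star ψ) = 0 := by
    simp [Gd, Finset.sum_mul, mul_assoc, h1]
  have h3 : vecMulVec ψ (star ψ) * (Gd D)ᴴ = 0 := by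
    have := congrArg conjTranspose h2
    rwa [conjTranspose_mul, (posSemidef_vecMulVec_self_star ψ).1.eq, conjTranspose_zero] at this
  rw [gen_apply, h2, h3]
  simp [h1]

lemma unique_of_gas (L : Matrix ι ι ℂ →ₗ[ℂ] Matrix ι ι ℂ) (ρ σ : Matrix ι ι ℂ)
    (hL : IsGAS L ρ) (hσ : IsDensity σ) (h : L σ = 0) : σ = ρ := by
  ext i j
  have := hL.2 σ hσ (fun _ => σ) rfl (fun t i j => by
    rw [h]; exact hasDerivAt_const _ _) i j
  exact tendsto_nhds_unique tendsto_const_nhds this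

end Aux2

section Lift

set_option linter.unusedSectionVars false

variable {n : ℕ} (d : Fin n → Type*) [∀ a, Fintype (d a)] [∀ a, DecidableEq (d a)]
  (N : Finset (Fin n))

lemma lift_apply (A : Matrix (nbhdIdx d N) (nbhdIdx d N) ℂ) (x y : ∀ a, d a) :
    nbhdLift d N A x y = A (splitEquiv d N x).1 (splitEquiv d N y).1 *
      (1 : Matrix (nbhdCoIdx d N) (nbhdCoIdx d N) ℂ) (splitEquiv d N x).2 (splitEquiv d N y).2 := rfl

lemma lift_add (A B : Matrix (nbhdIdx d N) (nbhdIdx d N) ℂ) :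
    nbhdLift d N (A + B) = nbhdLift d N A + nbhdLift d N B := by
  ext x y
  simp [lift_apply, add_mul]

lemma lift_smul (c : ℂ) (A : Matrix (nbhdIdx d N) (nbhdIdx d N) ℂ) :
    nbhdLift d N (c • A) = c • nbhdLift d N A := by
  ext x y
  simp [lift_apply, mul_assoc]

lemma lift_one : nbhdLift d N 1 = 1 := by
  unfold nbhdLift splitLift
  rw [kroneckerMap_one_one _ (by simp) (by simp) (by simp), submatrix_one_equiv]

lemma lift_mul (A B : Matrix (nbhdIdx d N) (nbhdIdx d N) ℂ) :
    nbhdLift d N (A * B) = nbhdLift d N A * nbhdLift d N B := by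
  unfold nbhdLift splitLift
  rw [submatrix_mul_equiv, ← mul_kronecker_mul, one_mul]

lemma lift_star (A : Matrix (nbhdIdx d N) (nbhdIdx d N) ℂ) :
    nbhdLift d N Aᴴ = (nbhdLift d N A)ᴴ := by
  unfold nbhdLift splitLift
  rw [conjTranspose_submatrix, conjTranspose_kronecker, conjTranspose_one]

/-- The lift as a linear map. -/
noncomputable def liftL : Matrix (nbhdIdx d N) (nbhdIdx d N) ℂ →ₗ[ℂ]
    Matrix (∀ a, d a) (∀ a, d a) ℂ where
  toFun := nbhdLift d N
  map_add' := lift_add d N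
  map_smul' := lift_smul d N

lemma lift_Gd {m : ℕ} (H : Matrix (nbhdIdx d N) (nbhdIdx d N) ℂ)
    (D : Fin m → Matrix (nbhdIdx d N) (nbhdIdx d N) ℂ) :
    nbhdLift d N (-(Complex.I • H) + Gd D) =
      -(Complex.I • nbhdLift d N H) + Gd (fun k => nbhdLift d N (D k)) := by
  change liftL d N _ = _
  simp only [Gd, map_add, map_neg, map_smul, map_sum]
  simp only [liftL, LinearMap.coe_mk, AddHom.coe_mk, lift_mul, lift_star]

lemma lift_sub_one (c : ℂ) (A : Matrix (nbhdIdx d N) (nbhdIdx d N) ℂ)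
    (v : (∀ a, d a) → ℂ) :
    nbhdLift d N (A - c • 1) *ᵥ v = nbhdLift d N A *ᵥ v - c • v := by
  have : nbhdLift d N (A - c • 1) = nbhdLift d N A - c • 1 := by
    change liftL d N _ = _
    rw [map_sub, map_smul]
    simp only [liftL, LinearMap.coe_mk, AddHom.coe_mk, lift_one]
  rw [this, sub_mulVec, smul_mulVec, one_mulVec]

end Lift

/-! ### Statement 19 -/

theorem stmt19
    {n : ℕ} {d : Fin n → Type*} [∀ a, Fintype (d a)] [∀ a, DecidableEq (d a)]
    {M : ℕ} (Nb : Fin M → Finset (Fin n))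
    (ψ : (∀ a, d a) → ℂ) (hψ : ∑ i, (starRingEnd ℂ) (ψ i) * ψ i = 1) :
    IsDQLS d Nb ψ ↔ IsFFQLS d Nb (Matrix.vecMulVec ψ (star ψ)) := by
  have hψ1 : star ψ ⬝ᵥ ψ = 1 := hψ
  constructor
  · rintro ⟨Lj, hLj, hG⟩
    refine ⟨Lj, fun j => ?_, fun σ hσ h0 j => ?_, hG⟩
    · obtain ⟨m, Dk, h, -⟩ := hLj j
      refine ⟨0, Matrix.isHermitian_zero, m, Dk, ?_⟩
      have h0 : nbhdLift d (Nb j) 0 = 0 := (liftL d (Nb j)).map_zero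
      rw [h0]; exact h
    · obtain ⟨m, Dk, h, hk⟩ := hLj j
      rw [unique_of_gas _ _ σ hG hσ h0, h, lindblad_zero]
      exact gen_pure_zero _ ψ hk
  · rintro ⟨Lj, hLj, hFF, hG⟩
    have hinv := hFF _ (pure_density ψ hψ1) hG.1
    choose H hH m Lk hL using hLj
    have hgen : ∀ j, Lj j = gen (fun k => nbhdLift d (Nb j) (Lk j k))
        (nbhdLift d (Nb j) (-(Complex.I • H j) + Gd (Lk j))) := fun j => by
      rw [hL j, lindblad_eq, lift_Gd]
      rw [IsHermitian, ← lift_star, (hH j).eq]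
    have hp := fun j => pure_inv _ _ ψ hψ1 (by rw [← hgen j]; exact hinv j)
    choose l hl using fun j => (hp j).1
    choose g hg using fun j => (hp j).2
    let D : ∀ j, Fin (m j + 1) → Matrix (nbhdIdx d (Nb j)) (nbhdIdx d (Nb j)) ℂ := fun j =>
      Fin.cons ((-(Complex.I • H j) + Gd (Lk j)) - g j • 1) (fun k => Lk j k - l j k • 1)
    have hDψ : ∀ j k, nbhdLift d (Nb j) (D j k) *ᵥ ψ = 0 := by
      intro j k
      refine Fin.cases ?_ (fun k => ?_) k
      · simp only [D, Fin.cons_zero]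
        rw [lift_sub_one, hg, sub_self]
      · simp only [D, Fin.cons_succ]
        rw [lift_sub_one, hl, sub_self]
    refine ⟨fun j => lindbladMap 0 (fun k => nbhdLift d (Nb j) (D j k)),
      fun j => ⟨m j + 1, D j, rfl, hDψ j⟩, ?_⟩
    simp only [lindblad_zero]
    rw [sum_gen (fun j k => nbhdLift d (Nb j) (D j k))]
    refine gas_of_no_invariant _ ψ hψ1 (fun p => hDψ p.1 p.2) fun S hS hSψ => ?_
    refine no_inv_of_gas _ ψ hψ1 hG S hSψ fun X hX u => ?_
    rw [LinearMap.sum_apply, sum_mulVec]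
    refine S.sum_mem fun j _ => ?_
    rw [hgen j]
    refine gen_inv _ _ X S (fun k v hv => ?_) (fun v hv => ?_) hX u
    · have := hS ⟨j, k.succ⟩ v hv
      simp only [D, Fin.cons_succ] at this
      rw [lift_sub_one] at this
      simpa using S.add_mem this (S.smul_mem (l j k) hv)
    · have := hS ⟨j, 0⟩ v hv
      simp only [D, Fin.cons_zero] at this
      rw [lift_sub_one] at this
      simpa using S.add_mem this (S.smul_mem (g j) hv)

end QDS
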